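/- Every execution of Approval-STV on a profile of n weak orders over a candidate set C with |C| ≥ k returns a committee of exactly k candidates: at most k candidates can be selected because each selection spends exactly q = n/(k+1) of the total initial budget n = (k+1)q, and at least k candidates are selected (as follows from generalized PSC applied with S = N, T = C, ℓ = k). -/

import Mathlib

/-!
Along an execution with quota `q = n / (k + 1)`, each selection spends exactly `q`, so the
remaining total budget is always `n - |W| q = (k + 1 - |W|) q`. Two facts bound the committee.

* A selection requires the supporters to hold more than `q`, hence `(k + 1 - |W|) q > q`, i.e.
  `|W| < k` before the selection. So `|W| ≤ k` throughout.
* An elimination requires every remaining candidate to have support at most `q`. Every voter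
  supports at least one remaining candidate (`WeakOrder.exists_top`), so the total budget is at most
  `|R| q` (`sum_budget_le_sum_supp`); hence `k + 1 - |W| ≤ |R|`, and deleting one candidate keeps
  `k ≤ |W| + |R|`.

These are packaged in the invariant `STVInv`; at the end `R = ∅`, so both bounds force `|W| = k`.
-/

open Finset

attribute [local instance] Classical.propDecidable

/-- A weak order on a candidate type `C`: a complete and transitive binary relation. -/
structure WeakOrder (C : Type*) where
  rel : C → C → Prop
  total : ∀ a b, rel a b ∨ rel b a
  trans : ∀ a b c, rel a b → rel b c → rel a c

namespace WeakOrder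

variable {C : Type*}

/-- Strict preference. -/
def strict (w : WeakOrder C) (a b : C) : Prop :=
  w.rel a b ∧ ¬ w.rel b a

/-- Indifference. -/
def indiff (w : WeakOrder C) (a b : C) : Prop :=
  w.rel a b ∧ w.rel b a

/-- The set of top-ranked candidates of `w` within the candidate set `A`. -/
noncomputable def topSet (w : WeakOrder C) (A : Finset C) : Finset C :=
  A.filter fun c => ∀ d ∈ A, w.rel c d

variable [DecidableEq C]

/-- Number of candidates in `A` strictly preferred to `a`. -/
noncomputable def cardAbove (w : WeakOrder C) (A : Finset C) (a : C) : ℕ :=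
  (A.filter fun b => w.strict b a).card

/-- The (0-based) index of the indifference class of `a` within `A`
(0 = top indifference class). -/
noncomputable def classIdx (w : WeakOrder C) (A : Finset C) (a : C) : ℕ :=
  ((A.filter fun b => w.strict b a).image (w.cardAbove A)).card

/-- The number of indifference classes of `w` on `A`. -/
noncomputable def numClasses (w : WeakOrder C) (A : Finset C) : ℕ :=
  (A.image (w.cardAbove A)).card

/-- The order type of `w` on `A`: the list of sizes of its indifference classes,
from the top class downwards. -/
noncomputable def orderType (w : WeakOrder C) (A : Finset C) : List ℕ :=
  (List.range (w.numClasses A)).map fun j => (A.filter fun a => w.classIdx A a = j).card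

end WeakOrder

/-- Weak order induced by a rank function (smaller rank = more preferred). -/
def ofRank {C : Type*} (ρ : C → ℕ) : WeakOrder C where
  rel a b := ρ a ≤ ρ b
  total a b := le_total _ _
  trans _ _ _ hab hbc := le_trans hab hbc

section Rules

variable {C N : Type*} [DecidableEq C] [Fintype N]

/-- The score of candidate `a` in profile `P` on remaining candidate set `A`,
under the scoring system `s` (which maps an order type and a 0-based class index
to a real score). -/
noncomputable def totalScore (s : List ℕ → ℕ → ℝ) (P : N → WeakOrder C)
    (A : Finset C) (a : C) : ℝ :=
  ∑ i : N, s ((P i).orderType A) ((P i).classIdx A a)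

/-- The set of lowest-scoring candidates in `A`. -/
noncomputable def lowest (s : List ℕ → ℕ → ℝ) (P : N → WeakOrder C)
    (A : Finset C) : Finset C :=
  A.filter fun c => ∀ d ∈ A, totalScore s P A c ≤ totalScore s P A d

/-- Fuel-based helper for the elimination scoring rule. -/
noncomputable def winnersAux (s : List ℕ → ℕ → ℝ) (P : N → WeakOrder C) :
    ℕ → Finset C → Finset C
  | 0, A => A
  | n + 1, A =>
    if A.card ≤ 1 then A
    else (lowest s P A).biUnion fun c => winnersAux s P n (A.erase c)

/-- The elimination scoring rule associated with scoring system `s`: repeatedly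
eliminate a lowest-scoring candidate (parallel-universe tie-breaking) until one
candidate remains. -/
noncomputable def winners (s : List ℕ → ℕ → ℝ) (P : N → WeakOrder C)
    (A : Finset C) : Finset C :=
  winnersAux s P A.card A

/-- Approval score: the number of voters ranking `c` in their top indifference
class within `A`. -/
noncomputable def approvalScore (P : N → WeakOrder C) (A : Finset C) (c : C) : ℕ :=
  (Finset.univ.filter fun i => c ∈ (P i).topSet A).card

end Rules

/-- The approval scoring system: `s(τ) = (1,0,…,0)` for every order type `τ`
(with `s(τ) = (0)` when `|τ| = 1`). -/
noncomputable def approvalScoring : List ℕ → ℕ → ℝ :=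
  fun τ j => if j = 0 ∧ 2 ≤ τ.length then 1 else 0

/-- The split scoring system: `s(τ) = (1/τ(1),0,…,0)` for every order type `τ`
(with `s(τ) = (0)` when `|τ| = 1`). -/
noncomputable def splitScoring : List ℕ → ℕ → ℝ :=
  fun τ j => if j = 0 ∧ 2 ≤ τ.length then ((τ.headI : ℝ))⁻¹ else 0

/-- The Borda-style scoring system:
`s(τ) = (m−1, m−1−τ(1), …, m−1−∑_{i<k−1} τ(i))` where `m = τ.sum`. -/
noncomputable def bordaScoring : List ℕ → ℕ → ℝ :=
  fun τ j => ((τ.sum : ℝ) - 1) - (((τ.take j).sum : ℕ) : ℝ)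

/-- Nonnegativity of a scoring system. -/
def NonnegSys (s : List ℕ → ℕ → ℝ) : Prop := ∀ τ j, 0 ≤ s τ j

/-- The last score value of every (nonempty) order type is zero. -/
def LastZeroSys (s : List ℕ → ℕ → ℝ) : Prop :=
  ∀ τ : List ℕ, τ ≠ [] → s τ (τ.length - 1) = 0

/-- Monotonicity of a scoring system: earlier indifference classes get weakly
higher scores. -/
def MonotoneSys (s : List ℕ → ℕ → ℝ) : Prop :=
  ∀ τ i j, i ≤ j → s τ j ≤ s τ i

section CloneHoverEtc

variable {C N : Type*}

/-- `X` is a clone set in the profile `P` relative to ambient candidate set `A`. -/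
def IsCloneSet (P : N → WeakOrder C) (A X : Finset C) : Prop :=
  X ⊆ A ∧ ∀ i : N, ∀ c ∈ A, c ∉ X →
    (∀ x ∈ X, (P i).strict x c) ∨ (∀ x ∈ X, (P i).indiff x c) ∨
      (∀ x ∈ X, (P i).strict c x)

/-- `w2` is obtained from `w` by a `c`-hover: `c` is alone in its (non-top)
indifference class in `w`, and in `w2` it is merged into the indifference class
directly above it, everything else being unchanged. -/
def IsCHover (w w2 : WeakOrder C) (c : C) : Prop :=
  (∀ x, x ≠ c → ¬ w.indiff c x) ∧
  (∃ b, w.strict b c) ∧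
  (∀ a b, a ≠ c → (w2.rel a b ↔ w.rel a b)) ∧
  (∀ b, w2.rel c b ↔ (w.rel c b ∨ ((w.strict b c) ∧ ∀ y, w.strict y c → w.rel b y)))

/-- The sincere coarsening of `w` merging all candidates strictly preferred to
`b` into a single top indifference class, leaving the rest unchanged. -/
def mergeAbove (w : WeakOrder C) (b : C) : WeakOrder C where
  rel u v := w.strict u b ∨ (¬ w.strict v b ∧ w.rel u v)
  total u v := by
    by_cases hu : w.strict u b
    · exact Or.inl (Or.inl hu)
    · by_cases hv : w.strict v b
      · exact Or.inr (Or.inl hv)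
      · rcases w.total u v with h | h
        · exact Or.inl (Or.inr ⟨hv, h⟩)
        · exact Or.inr (Or.inr ⟨hu, h⟩)
  trans u v x huv hvx := by
    rcases huv with h | ⟨hv, huv⟩
    · exact Or.inl h
    · rcases hvx with h | ⟨hx, hvx⟩
      · exact absurd h hv
      · exact Or.inr ⟨hx, w.trans _ _ _ huv hvx⟩

/-- Pairwise majority margin of `a` over `b`. -/
noncomputable def margin [Fintype N] (P : N → WeakOrder C) (a b : C) : ℤ :=
  ((Finset.univ.filter fun i => (P i).strict a b).card : ℤ) -
    ((Finset.univ.filter fun i => (P i).strict b a).card : ℤ)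

end CloneHoverEtc

section STV

variable {C N : Type*} [DecidableEq C] [Fintype C] [Fintype N]

/-- The supporters of `c` among remaining candidates `R`: voters with `c` in
their top indifference class within `R`. -/
noncomputable def suppSet (P : N → WeakOrder C) (R : Finset C) (c : C) : Finset N :=
  Finset.univ.filter fun i => ∀ d ∈ R, (P i).rel c d

/-- A state of the Approval-STV computation: remaining candidates, selected
candidates, and the budget of each voter. -/
structure STVState (C N : Type*) where
  R : Finset C
  W : Finset C
  b : N → ℝ

/-- One step of Approval-STV with quota `q`: either select an eligible candidate
(whose supporters hold strictly more than `q` budget), charging its supporters a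
total of exactly `q`, or, if no candidate is eligible, eliminate some candidate. -/
inductive STVStep (P : N → WeakOrder C) (q : ℝ) : STVState C N → STVState C N → Prop
  | select (R W : Finset C) (b b' : N → ℝ) (c : C) (hc : c ∈ R)
      (helig : q < ∑ i ∈ suppSet P R c, b i)
      (hpay : ∀ i ∉ suppSet P R c, b' i = b i)
      (hdec : ∀ i : N, b' i ≤ b i)
      (hnn : ∀ i : N, 0 ≤ b' i)
      (htot : ∑ i ∈ suppSet P R c, b' i = (∑ i ∈ suppSet P R c, b i) - q) :
      STVStep P q ⟨R, W, b⟩ ⟨R.erase c, insert c W, b'⟩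
  | eliminate (R W : Finset C) (b : N → ℝ) (c : C) (hc : c ∈ R)
      (hnone : ∀ c' ∈ R, (∑ i ∈ suppSet P R c', b i) ≤ q) :
      STVStep P q ⟨R, W, b⟩ ⟨R.erase c, W, b⟩

/-- `W` is a possible outcome of an execution of Approval-STV with quota `q`:
starting from all candidates remaining, empty committee and unit budgets, some
sequence of steps ends with no candidate remaining and committee `W`. -/
def IsSTVOutcome (P : N → WeakOrder C) (q : ℝ) (W : Finset C) : Prop :=
  ∃ b : N → ℝ,
    Relation.ReflTransGen (STVStep P q) ⟨Finset.univ, ∅, fun _ => 1⟩ ⟨∅, W, b⟩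

/-- The closure of `T` with respect to the voter group `S`. -/
noncomputable def closureSet (P : N → WeakOrder C) (S : Finset N) (T : Finset C) :
    Finset C :=
  Finset.univ.filter fun c => ∃ i ∈ S, ∃ t ∈ T, (P i).rel c t

end STV

/-- A weak order is `T`-supporting if every member of `T` is ranked weakly above
every non-member. -/
def IsTSupporting {C : Type*} (w : WeakOrder C) (T : Finset C) : Prop :=
  ∀ t ∈ T, ∀ c, c ∉ T → w.rel t c

theorem WeakOrder.exists_top {C : Type*} (w : WeakOrder C) {R : Finset C} (hR : R.Nonempty) :
    ∃ c ∈ R, ∀ d ∈ R, w.rel c d := by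
  induction hR using Finset.Nonempty.cons_induction with
  | singleton a =>
    refine ⟨a, by simp, fun d hd => ?_⟩
    rw [Finset.mem_singleton] at hd
    subst hd
    exact (w.total d d).elim id id
  | cons a s ha hs ih =>
    obtain ⟨c, hc, htop⟩ := ih
    rcases w.total a c with h | h
    · refine ⟨a, by simp, fun d hd => ?_⟩
      rcases Finset.mem_cons.1 hd with rfl | hd
      · exact (w.total d d).elim id id
      · exact w.trans _ _ _ h (htop d hd)
    · refine ⟨c, by simp [hc], fun d hd => ?_⟩
      rcases Finset.mem_cons.1 hd with rfl | hd
      · exact h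
      · exact htop d hd

/-- Since every voter supports some remaining candidate, the supports of the remaining candidates
together cover the whole budget. -/
theorem sum_budget_le_sum_supp {C N : Type*} [DecidableEq C] [Fintype C] [Fintype N]
    (P : N → WeakOrder C) {R : Finset C} (hR : R.Nonempty) (b : N → ℝ) (hb : ∀ i, 0 ≤ b i) :
    ∑ i, b i ≤ ∑ c ∈ R, ∑ i ∈ suppSet P R c, b i := by
  have hswap : ∑ c ∈ R, ∑ i ∈ suppSet P R c, b i
      = ∑ i, ∑ c ∈ R, if ∀ d ∈ R, (P i).rel c d then b i else 0 := by
    simp only [suppSet, Finset.sum_filter]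
    exact Finset.sum_comm
  rw [hswap]
  refine Finset.sum_le_sum fun i _ => ?_
  obtain ⟨c, hc, htop⟩ := (P i).exists_top hR
  calc b i = if ∀ d ∈ R, (P i).rel c d then b i else 0 := (if_pos htop).symm
    _ ≤ _ := Finset.single_le_sum
        (f := fun c => if ∀ d ∈ R, (P i).rel c d then b i else 0)
        (fun c _ => by split_ifs; exacts [hb i, le_rfl]) hc

/-- The invariant of an execution with quota `q` and target size `k`: budgets are nonnegative with
total `(k + 1 - |W|) q`, no remaining candidate is already selected, and the committee has at most
`k` members but can still be completed to `k` members from the remaining candidates. -/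
structure STVInv {C N : Type*} [Fintype N] (q : ℝ) (k : ℕ) (s : STVState C N) : Prop where
  nonneg : ∀ i, 0 ≤ s.b i
  total : ∑ i, s.b i = ((k : ℝ) + 1 - s.W.card) * q
  disj : Disjoint s.R s.W
  le : s.W.card ≤ k
  ge : k ≤ s.W.card + s.R.card

theorem STVInv.step {C N : Type*} [DecidableEq C] [Fintype C] [Fintype N]
    {P : N → WeakOrder C} {q : ℝ} (hq : 0 < q) {k : ℕ} {s t : STVState C N} (hs : STVInv q k s)
    (hst : STVStep P q s t) : STVInv q k t := by
  obtain ⟨hnonneg, htotal, hdisj, hle, hge⟩ := hs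
  cases hst with
  | select R W b b' c hc helig hpay hdec hnn htot =>
    dsimp only at *
    have hcW : c ∉ W := Finset.disjoint_left.1 hdisj hc
    have hcard : (insert c W).card = W.card + 1 := Finset.card_insert_of_notMem hcW
    have hR : (R.erase c).card + 1 = R.card := Finset.card_erase_add_one hc
    have hsupp : ∑ i ∈ suppSet P R c, b i ≤ ∑ i, b i :=
      Finset.sum_le_sum_of_subset_of_nonneg (Finset.subset_univ _) fun i _ _ => hnonneg i
    have hlt : W.card < k := by
      have h : 1 * q < ((k : ℝ) + 1 - W.card) * q := by linarith
      have h' := lt_of_mul_lt_mul_right h hq.le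
      have : (W.card : ℝ) < k := by linarith
      exact_mod_cast this
    have hcompl : ∑ i ∈ (suppSet P R c)ᶜ, b' i = ∑ i ∈ (suppSet P R c)ᶜ, b i :=
      Finset.sum_congr rfl fun i hi => hpay i (Finset.mem_compl.1 hi)
    have h1 := Finset.sum_add_sum_compl (suppSet P R c) b
    have h2 := Finset.sum_add_sum_compl (suppSet P R c) b'
    refine ⟨hnn, ?_, ?_, ?_, ?_⟩
    · dsimp only
      rw [hcard]
      push_cast
      linarith
    · rw [Finset.disjoint_insert_right]
      exact ⟨Finset.notMem_erase c R, hdisj.mono_left (Finset.erase_subset c R)⟩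
    · dsimp only
      omega
    · dsimp only
      omega
  | eliminate R W b c hc hnone =>
    dsimp only at *
    have hR : (R.erase c).card + 1 = R.card := Finset.card_erase_add_one hc
    have hcover := sum_budget_le_sum_supp P ⟨c, hc⟩ b hnonneg
    have hbound : ∑ c' ∈ R, ∑ i ∈ suppSet P R c', b i ≤ R.card * q := by
      simpa using Finset.sum_le_card_nsmul R _ q hnone
    have hlt : k + 1 ≤ W.card + R.card := by
      have h' : (k : ℝ) + 1 - W.card ≤ R.card :=
        le_of_mul_le_mul_right (by linarith) hq
      have : (k : ℝ) + 1 ≤ W.card + R.card := by linarith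
      exact_mod_cast this
    refine ⟨hnonneg, htotal, hdisj.mono_left (Finset.erase_subset c R), hle, ?_⟩
    dsimp only
    omega

/-- Every execution of Approval-STV on a profile of `n ≥ 1`
weak orders over a candidate set `C` with `|C| ≥ k` returns a committee of
exactly `k` candidates. -/
theorem approvalSTV_selects_exactly_k
    {C N : Type*} [Fintype C] [DecidableEq C] [Fintype N]
    (k : ℕ) (hk : k ≤ Fintype.card C) (hn : 0 < Fintype.card N)
    (P : N → WeakOrder C) (W : Finset C)
    (hW : IsSTVOutcome P ((Fintype.card N : ℝ) / (k + 1)) W) :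
    W.card = k := by
  have hq : 0 < (Fintype.card N : ℝ) / (k + 1) := by positivity
  obtain ⟨b, hrun⟩ := hW
  have hinit : STVInv ((Fintype.card N : ℝ) / (k + 1)) k
      (⟨Finset.univ, ∅, fun _ => 1⟩ : STVState C N) := by
    refine ⟨fun _ => zero_le_one, ?_, Finset.disjoint_empty_right _, by simp, by simpa using hk⟩
    have : (k : ℝ) + 1 ≠ 0 := by positivity
    simp
    field_simp
  have hfin : STVInv ((Fintype.card N : ℝ) / (k + 1)) k (⟨∅, W, b⟩ : STVState C N) := by
    generalize (⟨∅, W, b⟩ : STVState C N) = t at hrun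
    induction hrun with
    | refl => exact hinit
    | tail _ hstep ih => exact ih.step hq hstep
  have h1 := hfin.le
  have h2 := hfin.ge
  simp only [Finset.card_empty, add_zero] at h1 h2
  omega
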